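/- arXiv:1310.6921 — 2 statements merged into one kernel-verified Lean document; each statement's English description precedes it below -/
import Mathlib

section
/- Let R = (c_1, …, c_r) be a finite family of rankings of Fin n and let D_1 ≠ D_2 be two different sets of eventual competitors (connected components of the competitivity graph G_c(R)). If a ∈ D_1, b, b' ∈ D_2 and there is a ranking c_m ∈ R with a ≺_{c_m} b, then there is a ranking c_{m'} ∈ R with a ≺_{c_{m'}} b'. -/
/-- `i` precedes `j` in the ranking `c` (i.e. the position of `i` is smaller). -/
def Prec {n : ℕ} (c : Equiv.Perm (Fin n)) (i j : Fin n) : Prop :=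
  c⁻¹ i < c⁻¹ j

/-- Two nodes compete with respect to a family of rankings `c`. -/
def Compete {n r : ℕ} (c : Fin r → Equiv.Perm (Fin n)) (i j : Fin n) : Prop :=
  ∃ s t : Fin r, Prec (c s) i j ∧ Prec (c t) j i

/-- The competitivity graph of a family of rankings. -/
def competitivityGraph {n r : ℕ} (c : Fin r → Equiv.Perm (Fin n)) :
    SimpleGraph (Fin n) where
  Adj i j := Compete c i j
  symm := by
    refine ⟨?_⟩
    rintro i j ⟨s, t, h1, h2⟩
    exact ⟨t, s, h2, h1⟩
  loopless := by
    refine ⟨?_⟩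
    rintro i ⟨s, t, h1, _⟩
    exact lt_irrefl _ h1

/-- If `D_1 ≠ D_2` are two different connected components of the competitivity graph,
`a ∈ D_1`, `b, b' ∈ D_2` and `a` precedes `b` in some ranking, then `a` precedes `b'`
in some ranking. -/
theorem outlink_spreads {n r : ℕ} (c : Fin r → Equiv.Perm (Fin n))
    (D1 D2 : (competitivityGraph c).ConnectedComponent) (hD : D1 ≠ D2)
    (a b b' : Fin n) (ha : a ∈ D1.supp) (hb : b ∈ D2.supp) (hb' : b' ∈ D2.supp)
    (m : Fin r) (hm : Prec (c m) a b) :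
    ∃ m' : Fin r, Prec (c m') a b' := by
  have hna : ¬ (competitivityGraph c).Reachable a b := by
    intro h
    apply hD
    rw [SimpleGraph.ConnectedComponent.mem_supp_iff] at ha hb
    rw [← ha, ← hb]
    exact SimpleGraph.ConnectedComponent.sound h
  have hbb : (competitivityGraph c).Reachable b b' := by
    rw [SimpleGraph.ConnectedComponent.mem_supp_iff] at hb hb'
    exact SimpleGraph.ConnectedComponent.exact (hb.trans hb'.symm)
  clear ha hb hb' hD
  obtain ⟨p⟩ := hbb
  induction p generalizing m with
  | nil => exact ⟨m, hm⟩
  | @cons x y z hxy p ih =>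
    obtain ⟨s, t, hs, ht⟩ := id hxy
    have hax : Prec (c s) a x := by
      rcases lt_trichotomy ((c s)⁻¹ a) ((c s)⁻¹ x) with h | h | h
      · exact h
      · have hax := (c s)⁻¹.injective h
        subst hax
        exact absurd (SimpleGraph.Reachable.refl _) hna
      · have hadj : (competitivityGraph c).Adj a x := ⟨m, s, hm, h⟩
        exact absurd hadj.reachable hna
    exact ih s (lt_trans hax hs) (fun h => hna (h.trans hxy.symm.reachable))
end

section
/- Let R = (c_1, …, c_r) be a finite family of rankings of Fin n (r ≥ 1) and let D_1 ≠ D_2 be two different sets of eventual competitors (connected components of the competitivity graph G_c(R)). Write D_i → D_j when for every a ∈ D_i and every b ∈ D_j there is a ranking c_m ∈ R with a ≺_{c_m} b. Then exactly one of D_1 → D_2 and D_2 → D_1 holds; consequently, → is a total order relation on the sets of eventual competitors. -/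
theorem prec_or {n : ℕ} (c : Equiv.Perm (Fin n)) {a b : Fin n} (h : a ≠ b) :
    Prec c a b ∨ Prec c b a :=
  lt_or_gt_of_ne fun e => h (c⁻¹.injective e)

theorem prec_all {n r : ℕ} (c : Fin r → Equiv.Perm (Fin n)) {a b : Fin n}
    (h : ¬ (competitivityGraph c).Reachable a b) {s : Fin r} (hs : Prec (c s) a b)
    (t : Fin r) : Prec (c t) a b := by
  have hne : a ≠ b := by
    rintro rfl
    exact h (SimpleGraph.Reachable.refl _)
  rcases prec_or (c t) hne with h1 | h1
  · exact h1
  · have hadj : (competitivityGraph c).Adj a b := ⟨s, t, hs, h1⟩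
    exact absurd hadj.reachable h

/-- Moving the left element along a walk avoiding the component of `b`. -/
theorem prec_walk {n r : ℕ} (c : Fin r → Equiv.Perm (Fin n)) {a a' : Fin n} (b : Fin n)
    (w : (competitivityGraph c).Walk a a') :
    ¬ (competitivityGraph c).Reachable a b → (∀ t, Prec (c t) a b) →
      ∀ t, Prec (c t) a' b := by
  induction w with
  | nil => exact fun _ h => h
  | @cons u v x huv p ih =>
    intro hn h
    have hv : ¬ (competitivityGraph c).Reachable v b := fun h' => hn (huv.reachable.trans h')
    have hne : v ≠ b := by
      rintro rfl
      exact hv (SimpleGraph.Reachable.refl _)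
    apply ih hv
    obtain ⟨s, t, h1, h2⟩ := huv
    rcases prec_or (c t) hne with h3 | h3
    · exact prec_all c hv h3
    · exact absurd (lt_trans (h t) h3) (lt_asymm h2)

/-- For any two different connected components `D_1 ≠ D_2` of the competitivity graph of
a nonempty family of rankings, exactly one of `D_1 → D_2` and `D_2 → D_1` holds, where
`D_i → D_j` means that every element of `D_i` precedes every element of `D_j` in some
ranking; hence `→` is a total order relation on the sets of eventual competitors. -/
theorem componentOrder_total {n r : ℕ} (hr : 1 ≤ r) (c : Fin r → Equiv.Perm (Fin n))
    (D1 D2 : (competitivityGraph c).ConnectedComponent) (hD : D1 ≠ D2) :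
    Xor' (∀ a ∈ D1.supp, ∀ b ∈ D2.supp, ∃ m : Fin r, Prec (c m) a b)
         (∀ a ∈ D2.supp, ∀ b ∈ D1.supp, ∃ m : Fin r, Prec (c m) a b) := by
  have hnr : ∀ a ∈ D1.supp, ∀ b ∈ D2.supp, ¬ (competitivityGraph c).Reachable a b := by
    intro a ha b hb h
    rw [SimpleGraph.ConnectedComponent.mem_supp_iff] at ha hb
    exact hD (ha ▸ hb ▸ SimpleGraph.ConnectedComponent.sound h)
  have hreach : ∀ (D : (competitivityGraph c).ConnectedComponent), ∀ a ∈ D.supp, ∀ b ∈ D.supp,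
      (competitivityGraph c).Reachable a b := by
    intro D a ha b hb
    rw [SimpleGraph.ConnectedComponent.mem_supp_iff] at ha hb
    exact SimpleGraph.ConnectedComponent.exact (ha.trans hb.symm)
  obtain ⟨a, ha⟩ := D1.nonempty_supp
  obtain ⟨b, hb⟩ := D2.nonempty_supp
  have hnr' : ∀ b ∈ D2.supp, ∀ a ∈ D1.supp, ¬ (competitivityGraph c).Reachable b a :=
    fun b hb a ha h => hnr a ha b hb h.symm
  have hne : ∀ x ∈ D1.supp, ∀ y ∈ D2.supp, x ≠ y := by
    rintro x hx y hy rfl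
    exact hnr x hx x hy (SimpleGraph.Reachable.refl _)
  let z : Fin r := ⟨0, hr⟩
  -- the order between the components is the order of any pair of elements
  have key : ∀ a ∈ D1.supp, ∀ b ∈ D2.supp, ∀ x ∈ D1.supp, ∀ y ∈ D2.supp,
      Prec (c z) a b → Prec (c z) x y := by
    intro a ha b hb x hx y hy h
    obtain ⟨w⟩ := hreach D1 a ha x hx
    have h1 := prec_walk c b w (hnr a ha b hb) (prec_all c (hnr a ha b hb) h)
    rcases prec_or (c z) (hne x hx y hy) with h2 | h2
    · exact h2
    · obtain ⟨w'⟩ := hreach D2 y hy b hb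
      have h3 := prec_walk c x w' (hnr' y hy x hx) (prec_all c (hnr' y hy x hx) h2)
      exact absurd (h1 z) (lt_asymm (h3 z))
  rcases prec_or (c z) (hne a ha b hb) with h | h
  · refine Or.inl ⟨fun x hx y hy => ⟨z, key a ha b hb x hx y hy h⟩, fun H => ?_⟩
    obtain ⟨m, hm⟩ := H b hb a ha
    exact lt_asymm h (prec_all c (hnr' b hb a ha) hm z)
  · refine Or.inr ⟨fun y hy x hx => ⟨z, ?_⟩, fun H => ?_⟩
    · rcases prec_or (c z) (hne x hx y hy) with h2 | h2
      · exact absurd (key x hx y hy a ha b hb h2) (lt_asymm h)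
      · exact h2
    · obtain ⟨m, hm⟩ := H a ha b hb
      exact lt_asymm h (prec_all c (hnr a ha b hb) hm z)
end
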